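/- For q, c ∈ ℤ[ω] with q ≡ c ≡ 1 (mod 3), the indicator of q ≡ c (mod 9) is given by (1/9)·Σ_{a,b=0}^{2} χ_c(ω^a λ^b)·conj(χ_q(ω^a λ^b)), where λ = 1 − ω and χ_m(·) = (·/m)₃. -/

import Mathlib

open Complex

noncomputable section

/-- The primitive cube root of unity `ω = e^{2πi/3}`. -/
def ω : ℂ := Complex.exp (2 * Real.pi * Complex.I / 3)

/-- The ring of Eisenstein integers `ℤ[ω]`, as a subring of `ℂ`. -/
def Zω : Subring ℂ := Subring.closure {ω}

/-- `ω` as an element of `ℤ[ω]`. -/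
def ωZ : Zω := ⟨ω, Subring.subset_closure rfl⟩

/-- The ramified prime `λ = 1 - ω` of `ℤ[ω]`. -/
def lamZ : Zω := 1 - ωZ

/-- The norm `N(a) = |a|²` from `ℚ(ω)` to `ℚ`, restricted to `ℤ[ω]`. -/
def Nm (a : Zω) : ℝ := Complex.normSq (a : ℂ)

/-- The norm of an Eisenstein integer, as a natural number. -/
def NmNat (a : Zω) : ℕ := ⌊Complex.normSq (a : ℂ)⌋₊

/-- `e(z) = e^{2πi Tr(z)} = e^{2πi (z + z̄)}`. -/
def eE (z : ℂ) : ℂ := Complex.exp (2 * Real.pi * Complex.I * (z + (starRingEnd ℂ) z))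

/-- `χ` is the cubic residue symbol `χ a b = (a/b)₃` on `ℤ[ω]`:
it is multiplicative in both arguments, and at prime moduli `π` coprime to `3`
it is given by the power-residue congruence
`(a/π)₃ ≡ a^{(N(π)-1)/3} (mod π)`, with values among `{1, ω, ω²}` (and `0` when `π ∣ a`). -/
def IsCubicSymbol (χ : Zω → Zω → Zω) : Prop :=
  (∀ a b₁ b₂ : Zω, χ a (b₁ * b₂) = χ a b₁ * χ a b₂) ∧
  (∀ a₁ a₂ b : Zω, χ (a₁ * a₂) b = χ a₁ b * χ a₂ b) ∧
  (∀ a : Zω, χ a 1 = 1) ∧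
  (∀ a π : Zω, Prime π → IsCoprime π 3 →
    (π ∣ a → χ a π = 0) ∧
    (¬ π ∣ a →
      ((χ a π : ℂ) = 1 ∨ (χ a π : ℂ) = ω ∨ (χ a π : ℂ) = ω ^ 2) ∧
      π ∣ (a ^ ((NmNat π - 1) / 3) - χ a π)))

/-- The shifted cubic Gauss sum `g(ν,c) = Σ_{d mod c} (d/c)₃ e(νd/c)`,
relative to a cubic residue symbol `χ`. -/
def gauss (χ : Zω → Zω → Zω) (ν c : Zω) : ℂ :=
  ∑' q : Zω ⧸ Ideal.span {c},
    ((χ (Quotient.out q) c : Zω) : ℂ) * eE (((ν * Quotient.out q : Zω) : ℂ) / (c : ℂ))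

/-- `μ` is the Möbius function of `ℤ[ω]`. -/
def IsMoebiusZω (μ : Zω → ℤ) : Prop :=
  μ 1 = 1 ∧
  (∀ a : Zω, ¬ Squarefree a → μ a = 0) ∧
  (∀ a b : Zω, IsCoprime a b → μ (a * b) = μ a * μ b) ∧
  (∀ π : Zω, Prime π → μ π = -1)

end


lemma omega_prim : IsPrimitiveRoot ω 3 := by
  have := Complex.isPrimitiveRoot_exp 3 (by norm_num)
  simpa [ω] using this

lemma omega_sq : ω ^ 2 + ω + 1 = 0 := by
  have h := omega_prim.geom_sum_eq_zero (by norm_num)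
  simp [Finset.sum_range_succ] at h
  linear_combination h

lemma omega_re : ω.re = -1 / 2 := by
  have h : ω = Complex.exp ((2 * Real.pi / 3 : ℝ) * Complex.I) := by
    unfold ω; push_cast; congr 1; ring
  rw [h, Complex.exp_ofReal_mul_I_re]
  rw [show 2 * Real.pi / 3 = Real.pi - Real.pi / 3 by ring, Real.cos_pi_sub, Real.cos_pi_div_three]
  norm_num

lemma omega_im : ω.im = √3 / 2 := by
  have h : ω = Complex.exp ((2 * Real.pi / 3 : ℝ) * Complex.I) := by
    unfold ω; push_cast; congr 1; ring
  rw [h, Complex.exp_ofReal_mul_I_im]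
  rw [show 2 * Real.pi / 3 = Real.pi - Real.pi / 3 by ring, Real.sin_pi_sub, Real.sin_pi_div_three]

lemma coe_omZ : ((ωZ : Zω) : ℂ) = ω := rfl

lemma omZ_sq : ωZ ^ 2 + ωZ + 1 = 0 := by
  apply Subtype.ext
  push_cast [coe_omZ]
  exact omega_sq

lemma omZ_cube : ωZ ^ 3 = 1 := by
  linear_combination (ωZ - 1) * omZ_sq

lemma normSq_form (x y : ℝ) : Complex.normSq (x + y * ω) = x ^ 2 - x * y + y ^ 2 := by
  have h3 : √3 * √3 = 3 := Real.mul_self_sqrt (by norm_num)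
  simp [Complex.normSq_apply, omega_re, omega_im]
  linear_combination (y ^ 2 / 4) * h3

lemma Zom_form (z : Zω) : ∃ a b : ℤ, z = a + b * ωZ := by
  obtain ⟨z, hz⟩ := z
  have : ∃ a b : ℤ, z = a + b * ω := by
    refine Subring.closure_induction (p := fun z _ => ∃ a b : ℤ, z = a + b * ω)
      ?_ ?_ ?_ ?_ ?_ ?_ hz
    · rintro x hx
      rw [Set.mem_singleton_iff] at hx
      exact ⟨0, 1, by simp [hx]⟩
    · exact ⟨0, 0, by simp⟩
    · exact ⟨1, 0, by simp⟩
    · rintro x y _ _ ⟨a, b, rfl⟩ ⟨c, d, rfl⟩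
      exact ⟨a + c, b + d, by push_cast; ring⟩
    · rintro x _ ⟨a, b, rfl⟩
      exact ⟨-a, -b, by push_cast; ring⟩
    · rintro x y _ _ ⟨a, b, rfl⟩ ⟨c, d, rfl⟩
      refine ⟨a * c - b * d, a * d + b * c - b * d, ?_⟩
      push_cast
      linear_combination (b * d : ℂ) * omega_sq
  obtain ⟨a, b, h⟩ := this
  refine ⟨a, b, Subtype.ext ?_⟩
  push_cast [coe_omZ]
  exact h

lemma normSq_int (a b : ℤ) : Complex.normSq (((a + b * ωZ : Zω)) : ℂ) = ((a ^ 2 - a * b + b ^ 2 : ℤ) : ℝ) := by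
  have := normSq_form a b
  push_cast [coe_omZ] at this ⊢
  exact this

lemma form_zero {a b : ℤ} (h : (a + b * ωZ : Zω) = 0) : a = 0 ∧ b = 0 := by
  have h1 := normSq_int a b
  rw [h] at h1
  simp only [ZeroMemClass.coe_zero, map_zero] at h1
  have h2 : a ^ 2 - a * b + b ^ 2 = 0 := by exact_mod_cast h1.symm
  constructor <;> nlinarith [sq_nonneg (2 * a - b), sq_nonneg (2 * b - a), sq_nonneg a, sq_nonneg b]

lemma form_inj {a b c d : ℤ} (h : (a + b * ωZ : Zω) = c + d * ωZ) : a = c ∧ b = d := by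
  have : ((a - c : ℤ) + (b - d : ℤ) * ωZ : Zω) = 0 := by
    push_cast
    linear_combination h
  have := form_zero this
  omega

lemma dvd_form {k : ℤ} {a b : ℤ} : ((k : Zω) ∣ (a + b * ωZ : Zω)) ↔ k ∣ a ∧ k ∣ b := by
  constructor
  · rintro ⟨t, ht⟩
    obtain ⟨c, d, rfl⟩ := Zom_form t
    have : (a + b * ωZ : Zω) = (k * c : ℤ) + (k * d : ℤ) * ωZ := by
      push_cast; rw [ht]; ring
    obtain ⟨h1, h2⟩ := form_inj this
    exact ⟨⟨c, h1⟩, ⟨d, h2⟩⟩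
  · rintro ⟨⟨c, rfl⟩, ⟨d, rfl⟩⟩
    exact ⟨c + d * ωZ, by push_cast; ring⟩

lemma NmNat_cast (z : Zω) : (NmNat z : ℝ) = Complex.normSq (z : ℂ) := by
  obtain ⟨a, b, rfl⟩ := Zom_form z
  unfold NmNat
  have h0 : 0 ≤ a ^ 2 - a * b + b ^ 2 := by nlinarith [sq_nonneg (2 * a - b), sq_nonneg b]
  obtain ⟨n, hn⟩ := Int.eq_ofNat_of_zero_le h0
  rw [normSq_int, hn]
  simp

lemma NmNat_form (a b : ℤ) : (NmNat (a + b * ωZ) : ℤ) = a ^ 2 - a * b + b ^ 2 := by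
  have := NmNat_cast (a + b * ωZ)
  rw [normSq_int] at this
  exact_mod_cast this

lemma NmNat_mul (x y : Zω) : NmNat (x * y) = NmNat x * NmNat y := by
  have : (NmNat (x * y) : ℝ) = NmNat x * NmNat y := by
    simp only [NmNat_cast]; push_cast; simp
  exact_mod_cast this

lemma euclid (x y : Zω) (hy : y ≠ 0) : ∃ q : Zω, NmNat (x - y * q) < NmNat y := by
  have hyC : (y : ℂ) ≠ 0 := by simpa using hy
  obtain ⟨u, v, huv⟩ : ∃ u v : ℝ, (x : ℂ) / y = u + v * ω := by
    have h3 : (√3 : ℝ) ≠ 0 := by positivity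
    refine ⟨((x : ℂ) / y).re + ((x : ℂ) / y).im / √3, 2 * ((x : ℂ) / y).im / √3, ?_⟩
    apply Complex.ext
    · simp [omega_re, omega_im]; ring
    · simp only [Complex.add_im, Complex.mul_im, Complex.ofReal_re, Complex.ofReal_im, omega_re, omega_im]
      field_simp
      ring
  refine ⟨round u + round v * ωZ, ?_⟩
  have key : ((x - y * (round u + round v * ωZ) : Zω) : ℂ) =
      y * (((u - round u : ℝ) : ℂ) + ((v - round v : ℝ) : ℂ) * ω) := by
    have : (x : ℂ) = y * (u + v * ω) := by rw [← huv]; field_simp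
    push_cast [coe_omZ]
    rw [this]; ring
  have : (NmNat (x - y * (round u + round v * ωZ)) : ℝ) < NmNat y := by
    rw [NmNat_cast, NmNat_cast, key, map_mul, normSq_form]
    have hpos : 0 < Complex.normSq (y : ℂ) := Complex.normSq_pos.mpr hyC
    have h1 := abs_le.mp (abs_sub_round u)
    have h2 := abs_le.mp (abs_sub_round v)
    have : (u - round u) ^ 2 - (u - round u) * (v - round v) + (v - round v) ^ 2 < 1 := by
      nlinarith [sq_nonneg (u - round u), sq_nonneg (v - round v)]
    nlinarith
  exact_mod_cast this

lemma NmNat_pos {y : Zω} (hy : y ≠ 0) : 0 < NmNat y := by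
  have hyC : (y : ℂ) ≠ 0 := by simpa using hy
  have := Complex.normSq_pos.mpr hyC
  rw [← NmNat_cast] at this
  exact_mod_cast this

instance zom_pid : IsPrincipalIdealRing Zω := by
  choose! q hq using euclid
  let E : EuclideanDomain Zω :=
    { (inferInstance : CommRing Zω), (inferInstance : Nontrivial Zω) with
      quotient := fun x y => if y = 0 then 0 else q x y
      quotient_zero := by intro a; simp
      remainder := fun x y => x - y * (if y = 0 then 0 else q x y)
      quotient_mul_add_remainder_eq := by intro a b; ring
      r := fun x y => NmNat x < NmNat y
      r_wellFounded := (measure NmNat).wf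
      remainder_lt := by
        intro a b hb
        simp only [hb, if_false]
        exact hq a b hb
      mul_left_not_lt := by
        intro a b hb
        rw [NmNat_mul]
        have := NmNat_pos hb
        nlinarith }
  exact @EuclideanDomain.to_principal_ideal_domain _ E

noncomputable def zomBasis : Module.Basis (Fin 2) ℤ Zω :=
  Module.Basis.mk (v := ![1, ωZ])
    (by
      rw [LinearIndependent.pair_iff]
      intro s t h
      apply form_zero
      simpa using h)
    (by
      intro z _
      obtain ⟨a, b, rfl⟩ := Zom_form z
      simp only [Matrix.range_cons, Matrix.range_empty, Set.union_empty, Set.singleton_union]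
      rw [Submodule.mem_span_pair]
      exact ⟨a, b, by simp⟩)

lemma zomBasis_repr (a b : ℤ) : zomBasis.repr (a + b * ωZ) = Finsupp.equivFunOnFinite.symm ![a, b] := by
  apply zomBasis.repr.symm.injective
  rw [LinearEquiv.symm_apply_apply, Module.Basis.repr_symm_apply, Finsupp.linearCombination_apply,
    Finsupp.sum_fintype _ _ (by simp)]
  simp [zomBasis]

instance : Module.Free ℤ Zω := Module.Free.of_basis zomBasis
instance : Module.Finite ℤ Zω := Module.Finite.of_basis zomBasis

lemma card_quot (π : Zω) : Nat.card (Zω ⧸ Ideal.span {π}) = NmNat π := by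
  have h := Ideal.absNorm_span_singleton π
  rw [Ideal.absNorm_apply, Submodule.cardQuot_apply] at h
  rw [h]
  obtain ⟨a, b, rfl⟩ := Zom_form π
  have e : (Algebra.norm ℤ) (a + b * ωZ : Zω) = a ^ 2 - a * b + b ^ 2 := by
    rw [Algebra.norm_eq_matrix_det zomBasis, Matrix.det_fin_two]
    simp only [Algebra.leftMulMatrix_eq_repr_mul]
    have e0 : (a + b * ωZ : Zω) * zomBasis 0 = a + b * ωZ := by simp [zomBasis]
    have e1 : (a + b * ωZ : Zω) * zomBasis 1 = (-b : ℤ) + (a - b : ℤ) * ωZ := by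
      simp [zomBasis]; linear_combination b * omZ_sq
    rw [e0, e1, zomBasis_repr, zomBasis_repr]
    simp
    ring
  rw [e]
  have := NmNat_form a b
  omega

def IsCR (v : Zω) : Prop := v = 1 ∨ v = ωZ ∨ v = ωZ ^ 2

lemma IsCR.cube {v : Zω} (h : IsCR v) : v ^ 3 = 1 := by
  rcases h with rfl | rfl | rfl
  · simp
  · exact omZ_cube
  · rw [← pow_mul, mul_comm, pow_mul, omZ_cube, one_pow]

lemma lam_sq : lamZ ^ 2 = -3 * ωZ := by
  unfold lamZ
  linear_combination omZ_sq

lemma sum_CR {ι : Type*} (s : Finset ι) (f : ι → Zω) (hf : ∀ i ∈ s, IsCR (f i)) :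
    ∃ K : ℕ, ∏ i ∈ s, f i = ωZ ^ K ∧ (3 : Zω) ∣ ∑ i ∈ s, f i - (s.card - lamZ * K) := by
  classical
  induction s using Finset.induction_on with
  | empty => exact ⟨0, by simp, by simp⟩
  | insert a s ha ih =>
    obtain ⟨K, h1, r, hr⟩ := ih (fun i hi => hf i (Finset.mem_insert_of_mem hi))
    rw [Finset.prod_insert ha, Finset.sum_insert ha, Finset.card_insert_of_notMem ha, h1]
    rcases hf a (Finset.mem_insert_self _ _) with h | h | h <;> rw [h]
    · exact ⟨K, by ring, r, by push_cast; linear_combination hr⟩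
    · exact ⟨K + 1, by ring, r, by push_cast; unfold lamZ at *; linear_combination hr⟩
    · exact ⟨K + 2, by ring, r - ωZ, by
        push_cast; unfold lamZ at *; linear_combination hr + omZ_sq⟩

lemma core {F : Type*} [Field F] [Fintype F] (f : Zω →+* F) (ψ : MulChar F Zω) (t : ℕ)
    (hcard : Fintype.card F = 3 * (t + 1) + 1)
    (hval : ∀ x, x ≠ 0 → IsCR (ψ x)) (hf : ∀ x, f (ψ x) = x ^ (t + 1))
    (hsep : ∀ v w, IsCR v → IsCR w → f v = f w → v = w) :
    f (jacobiSum ψ ψ) = 0 ∧ NmNat (jacobiSum ψ ψ) = Fintype.card F ∧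
    ∃ K : ℕ, ψ 3 * ωZ ^ K = 1 ∧ (9 : Zω) ∣ jacobiSum ψ ψ - (2 + 3 * (t - lamZ * K)) := by
  classical
  have hcard0 : (3 * (t + 1) + 1 : F) = 0 := by
    have := FiniteField.cast_card_eq_zero F
    rw [hcard] at this
    exact_mod_cast this
  have hne : ψ ≠ 1 := by
    intro h
    have h1 := FiniteField.sum_pow_lt_card_sub_one (K := F) (t + 1) (by omega)
    have h2 : ∑ x : F, ψ x = (Fintype.card F - 1 : ℕ) := by
      rw [h, MulChar.sum_one_eq_card_units, Fintype.card_units]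
    have h3 := congrArg f h2
    rw [map_sum, Finset.sum_congr rfl (fun x _ => hf x), h1, hcard] at h3
    have h4 : (3 * (t + 1) : F) = 0 := by
      have h5 : (0 : F) = ((3 * (t + 1) : ℕ) : F) := by
        rw [map_natCast] at h3; simpa using h3
      push_cast at h5
      exact h5.symm
    rw [h4] at hcard0
    simp at hcard0
  have h3 : ψ ^ 3 = 1 := by
    ext x
    rw [MulChar.pow_apply_coe, (hval x x.ne_zero).cube]
    simp
  have hinv : ψ⁻¹ = ψ ^ 2 := by
    rw [inv_eq_iff_mul_eq_one, ← pow_succ']; exact h3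
  have hm1 : ψ (-1) = 1 := by
    have h := (hval (-1) (by simp)).cube
    rw [← map_pow] at h
    rw [← h]; congr 1; ring
  have hsq : ψ * ψ ≠ 1 := by
    intro h
    apply hne
    calc ψ = ψ ^ 3 * (ψ * ψ)⁻¹ := by group
      _ = 1 := by rw [h3, h]; simp
  refine ⟨?_, ?_, ?_⟩
  · unfold jacobiSum
    rw [map_sum]
    simp only [map_mul, hf]
    have : ∀ x : F, x ^ (t + 1) * (1 - x) ^ (t + 1) =
        ∑ j ∈ Finset.range (t + 2), (-1) ^ j * ((t + 1).choose j : F) * x ^ (t + 1 + j) := by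
      intro x
      rw [show 1 - x = -x + 1 by ring, add_pow, Finset.mul_sum]
      refine Finset.sum_congr rfl fun j _ => ?_
      rw [neg_pow]; ring
    simp only [this]
    rw [Finset.sum_comm]
    refine Finset.sum_eq_zero fun j hj => ?_
    rw [← Finset.mul_sum, FiniteField.sum_pow_lt_card_sub_one, mul_zero]
    rw [Finset.mem_range] at hj
    omega
  · let φ := ψ.ringHomComp Zω.subtype
    have hinj : Function.Injective Zω.subtype := Subtype.val_injective
    have hφ : φ ≠ 1 := (MulChar.ringHomComp_ne_one_iff hinj).mpr hne
    have hφ2 : φ * φ ≠ 1 := by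
      rw [← MulChar.ringHomComp_mul]
      exact (MulChar.ringHomComp_ne_one_iff hinj).mpr hsq
    have hchar : ringChar ℂ ≠ ringChar F := by
      rw [ringChar.eq_zero]
      exact (CharP.ringChar_ne_zero_of_finite F).symm
    have key := jacobiSum_mul_jacobiSum_inv hchar hφ hφ hφ2
    have hc : jacobiSum φ⁻¹ φ⁻¹ = (starRingEnd ℂ) (jacobiSum φ φ) := by
      rw [← jacobiSum_ringHomComp]
      have : φ⁻¹ = φ.ringHomComp (starRingEnd ℂ) := by
        ext x
        have hc := congrArg (Subtype.val) (hval x x.ne_zero).cube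
        rw [MulChar.inv_apply_eq_inv', MulChar.ringHomComp_apply]
        have hn : ‖φ x‖ = 1 := by
          have : (φ x) ^ 3 = 1 := by
            simpa [φ, MulChar.ringHomComp_apply] using hc
          exact Complex.norm_eq_one_of_pow_eq_one this (by norm_num)
        exact Complex.inv_eq_conj hn
      rw [this]
    rw [hc, Complex.mul_conj, jacobiSum_ringHomComp] at key
    have : (NmNat (jacobiSum ψ ψ) : ℝ) = Fintype.card F := by
      rw [NmNat_cast]; exact_mod_cast key
    exact_mod_cast this
  · obtain ⟨g, hg⟩ := IsCyclic.exists_generator (α := Fˣ)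
    have hog : orderOf g = 3 * (t + 1) := by
      rw [orderOf_eq_card_of_forall_mem_zpowers hg, Nat.card_eq_fintype_card, Fintype.card_units, hcard]
      simp
    have hgp : IsPrimitiveRoot (g : F) (3 * (t + 1)) := by
      rw [← hog, ← orderOf_units]; exact IsPrimitiveRoot.orderOf _
    have hμ : IsPrimitiveRoot ((g : F) ^ 3) (t + 1) := hgp.pow (by omega) rfl
    set μ := (g : F) ^ 3 with hμdef
    have hμ0 : ∀ j, 1 - μ ^ (j + 1) = 0 → t + 1 ∣ j + 1 := fun j hj =>
      (hμ.pow_eq_one_iff_dvd _).mp (by linear_combination -hj)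
    obtain ⟨K, hK1, hK2⟩ := sum_CR (Finset.range t) (fun j => ψ (1 - μ ^ (j + 1))) (by
      intro j hj
      apply hval
      intro h
      have := Nat.le_of_dvd (by omega) (hμ0 j h)
      rw [Finset.mem_range] at hj
      omega)
    refine ⟨K, ?_, ?_⟩
    · rw [← hK1, ← map_prod, hμ.prod_one_sub_pow_eq_order, ← map_mul, ← hm1]
      congr 1
      linear_combination hcard0
    · have hker : ∀ y : F, y ≠ 0 → 1 + ψ y + ψ y ^ 2 = if y ^ (t + 1) = 1 then 3 else 0 := by
        intro y hy
        split_ifs with h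
        · have : ψ y = 1 := hsep _ _ (hval y hy) (Or.inl rfl) (by rw [hf, h, map_one])
          rw [this]; norm_num
        · have h1 : ψ y ≠ 1 := by
            intro h1
            apply h
            rw [← hf, h1, map_one]
          have h2 := (hval y hy).cube
          have : (ψ y - 1) * (1 + ψ y + ψ y ^ 2) = 0 := by linear_combination h2
          exact (mul_eq_zero.mp this).resolve_left (sub_ne_zero.mpr h1)
      have hsum1 : ∑ y : F, ψ (1 - y) * (1 + ψ y + ψ y ^ 2) = jacobiSum ψ ψ - 1 := by
        have e1 : ∑ y : F, ψ (1 - y) = 0 := by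
          rw [← MulChar.sum_eq_zero_of_ne_one hne]
          exact (Equiv.subLeft (1 : F)).sum_comp (fun y => ψ y)
        have e2 : ∑ y : F, ψ y * ψ (1 - y) = jacobiSum ψ ψ := rfl
        have e3 : ∑ y : F, ψ (1 - y) * ψ y ^ 2 = -1 := by
          have := jacobiSum_nontrivial_inv hne
          rw [hm1, jacobiSum_comm, hinv] at this
          rw [← this, jacobiSum_comm]
          unfold jacobiSum
          rw [← (Equiv.subLeft (1 : F)).sum_comp]
          refine Finset.sum_congr rfl fun y _ => ?_
          simp [MulChar.pow_apply' ψ (two_ne_zero)]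
        calc _ = ∑ y : F, ψ (1 - y) + ∑ y : F, ψ y * ψ (1 - y) + ∑ y : F, ψ (1 - y) * ψ y ^ 2 := by
              rw [← Finset.sum_add_distrib, ← Finset.sum_add_distrib]
              exact Finset.sum_congr rfl fun y _ => by ring
          _ = _ := by rw [e1, e2, e3]; ring
      have hsum2 : ∑ y : F, ψ (1 - y) * (1 + ψ y + ψ y ^ 2) =
          1 + 3 * ∑ j ∈ Finset.range t, ψ (1 - μ ^ (j + 1)) := by
        rw [← Finset.add_sum_erase _ _ (Finset.mem_univ (0 : F))]
        congr 1
        · simp [ψ.map_zero]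
        · have e1 : ∑ y ∈ Finset.univ.erase (0 : F), ψ (1 - y) * (1 + ψ y + ψ y ^ 2) =
              ∑ y ∈ (Finset.univ.filter (fun y : F => y ^ (t + 1) = 1)), 3 * ψ (1 - y) := by
            rw [Finset.sum_filter, ← Finset.add_sum_erase Finset.univ _ (Finset.mem_univ (0 : F))]
            simp only [ne_eq, Nat.add_eq_zero_iff, one_ne_zero, and_false, not_false_eq_true, zero_pow, zero_ne_one,
              if_false, zero_add]
            refine Finset.sum_congr rfl fun y hy => ?_
            rw [hker y (Finset.ne_of_mem_erase hy)]
            split_ifs <;> ring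
          have e2 : ∑ y ∈ (Finset.univ.filter (fun y : F => y ^ (t + 1) = 1)), 3 * ψ (1 - y) =
              ∑ j ∈ Finset.range (t + 1), 3 * ψ (1 - μ ^ j) := by
            symm
            refine Finset.sum_nbij (fun j => μ ^ j) ?_ ?_ ?_ ?_
            · intro j _
              simp [← pow_mul, mul_comm j, pow_mul _ (t + 1) j, hμ.pow_eq_one]
            · intro i hi j hj h
              simp at hi hj
              exact hμ.pow_inj (by omega) (by omega) h
            · intro y hy
              simp at hy
              obtain ⟨i, hi, h⟩ := hμ.eq_pow_of_pow_eq_one hy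
              exact ⟨i, by simpa using hi, h⟩
            · intros; rfl
          rw [e1, e2, Finset.sum_range_succ', ← Finset.mul_sum]
          simp [ψ.map_zero]
      rw [hsum1] at hsum2
      obtain ⟨r, hr⟩ := hK2
      rw [Finset.card_range] at hr
      exact ⟨r, by linear_combination hsum2 + 3 * hr⟩

lemma isCR_iff (v : Zω) : IsCR v ↔ ((v : ℂ) = 1 ∨ (v : ℂ) = ω ∨ (v : ℂ) = ω ^ 2) := by
  unfold IsCR
  simp only [Subtype.ext_iff]
  push_cast [coe_omZ]
  rfl

lemma cr_sep {π : Zω} (hπ : Prime π) (hcop : IsCoprime π 3) {v w : Zω} (hv : IsCR v) (hw : IsCR w)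
    (h : π ∣ v - w) : v = w := by
  by_contra hne
  have h3 : v - w ∣ 3 := by
    rcases hv with rfl | rfl | rfl <;> rcases hw with rfl | rfl | rfl
    · exact absurd rfl hne
    · exact ⟨1 - ωZ ^ 2, by linear_combination omZ_sq - omZ_cube⟩
    · exact ⟨1 - ωZ, by linear_combination omZ_sq - omZ_cube⟩
    · exact ⟨ωZ ^ 2 - 1, by linear_combination omZ_sq - omZ_cube⟩
    · exact absurd rfl hne
    · exact ⟨ωZ ^ 2 * (1 - ωZ ^ 2), by linear_combination ωZ ^ 3 * omZ_sq - (ωZ ^ 3 + 3) * omZ_cube⟩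
    · exact ⟨ωZ - 1, by linear_combination omZ_sq - omZ_cube⟩
    · exact ⟨ωZ ^ 2 * (ωZ ^ 2 - 1), by linear_combination ωZ ^ 3 * omZ_sq - (ωZ ^ 3 + 3) * omZ_cube⟩
    · exact absurd rfl hne
  exact hπ.not_isUnit (hcop.isUnit_of_dvd' dvd_rfl (h.trans h3))

lemma chi_congr {χ : Zω → Zω → Zω} (hχ : IsCubicSymbol χ) {π : Zω} (hπ : Prime π)
    (hcop : IsCoprime π 3) {a b : Zω} (h : π ∣ a - b) : χ a π = χ b π := by
  obtain ⟨ha0, ha⟩ := hχ.2.2.2 a π hπ hcop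
  obtain ⟨hb0, hb⟩ := hχ.2.2.2 b π hπ hcop
  by_cases hd : π ∣ a
  · have hdb : π ∣ b := by
      have := dvd_sub hd h
      simpa using this
    rw [ha0 hd, hb0 hdb]
  · have hdb : ¬ π ∣ b := by
      intro hb
      apply hd
      have := dvd_add h hb
      simpa using this
    obtain ⟨a1, a2⟩ := ha hd
    obtain ⟨b1, b2⟩ := hb hdb
    refine cr_sep hπ hcop ((isCR_iff _).mpr a1) ((isCR_iff _).mpr b1) ?_
    have h1 : π ∣ a ^ ((NmNat π - 1) / 3) - b ^ ((NmNat π - 1) / 3) :=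
      h.trans (sub_dvd_pow_sub_pow a b _)
    have h2 := dvd_sub (dvd_sub h1 a2) (dvd_neg.mpr b2)
    convert h2 using 1
    ring

lemma omZ_isUnit : IsUnit ωZ := IsUnit.of_mul_eq_one (ωZ ^ 2) (by rw [← omZ_cube]; ring)

lemma omZ_pow_one {k : ℕ} (h : ωZ ^ k = 1) : 3 ∣ k := by
  rw [← omega_prim.pow_eq_one_iff_dvd]
  have := congrArg Subtype.val h
  simpa [coe_omZ] using this

lemma isCR_pow (k : ℕ) : IsCR (ωZ ^ k) := by
  have : ωZ ^ k = ωZ ^ (k % 3) := by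
    conv_lhs => rw [← Nat.div_add_mod k 3, pow_add, pow_mul, omZ_cube, one_pow, one_mul]
  rw [this]
  have h : k % 3 < 3 := Nat.mod_lt _ (by norm_num)
  unfold IsCR
  interval_cases k % 3 <;> simp

lemma omega_zpow {k : ℕ} {j : ℤ} (h : (3 : ℤ) ∣ k - j) : ω ^ k = ω ^ j := by
  have h0 : ω ≠ 0 := omega_prim.ne_zero (by norm_num)
  have h1 : ω ^ ((k : ℤ) - j) = 1 := (omega_prim.zpow_eq_one_iff_dvd _).mpr (by exact_mod_cast h)
  rw [zpow_sub₀ h0, div_eq_one_iff_eq (zpow_ne_zero _ h0)] at h1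
  rw [← h1, zpow_natCast]

lemma prime_case {χ : Zω → Zω → Zω} (hχ : IsCubicSymbol χ) {π : Zω} (hπ : Prime π) (m n : ℤ)
    (he : π = 1 + 3 * (m + n * ωZ)) :
    (χ ωZ π : ℂ) = ω ^ (2 * m - n) ∧ (χ lamZ π : ℂ) = ω ^ m := by
  have hcop : IsCoprime π 3 := ⟨1, -(m + n * ωZ), by rw [he]; ring⟩
  have hN : (NmNat π : ℤ) = 1 + 6 * m - 3 * n + 9 * (m ^ 2 - m * n + n ^ 2) := by
    have : π = ((1 + 3 * m : ℤ) : Zω) + ((3 * n : ℤ) : Zω) * ωZ := by rw [he]; push_cast; ring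
    rw [this, NmNat_form]; ring
  have hmax : (Ideal.span {π}).IsMaximal :=
    PrincipalIdealRing.isMaximal_of_irreducible hπ.irreducible
  let _ : Field (Zω ⧸ Ideal.span {π}) := Ideal.Quotient.field _
  have hcq := card_quot π
  have : Finite (Zω ⧸ Ideal.span {π}) :=
    Nat.finite_of_card_ne_zero (by rw [hcq]; exact (NmNat_pos hπ.ne_zero).ne')
  let _ : Fintype (Zω ⧸ Ideal.span {π}) := Fintype.ofFinite _
  rw [Nat.card_eq_fintype_card] at hcq
  obtain ⟨t, ht⟩ : ∃ t, NmNat π = 3 * (t + 1) + 1 := by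
    have h1 : 1 < NmNat π := by rw [← hcq]; exact Fintype.one_lt_card
    exact ⟨(NmNat π - 1) / 3 - 1, by omega⟩
  have hk : (NmNat π - 1) / 3 = t + 1 := by omega
  let f := Ideal.Quotient.mk (Ideal.span {π})
  have hf0 : ∀ a, f a = 0 ↔ π ∣ a := fun a => by
    rw [Ideal.Quotient.eq_zero_iff_mem, Ideal.mem_span_singleton]
  have hout : ∀ a, χ (Quotient.out (f a)) π = χ a π := fun a =>
    chi_congr hχ hπ hcop (by
      rw [← hf0, map_sub, sub_eq_zero]
      exact Ideal.Quotient.mk_out (f a))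
  have hsurj : Function.Surjective f := Ideal.Quotient.mk_surjective
  have hcr : ∀ a, ¬ π ∣ a → IsCR (χ a π) := fun a ha =>
    (isCR_iff _).mpr ((hχ.2.2.2 a π hπ hcop).2 ha).1
  have hpow : ∀ a, f (χ a π) = f a ^ (t + 1) := by
    intro a
    obtain ⟨h0, h1⟩ := hχ.2.2.2 a π hπ hcop
    by_cases hd : π ∣ a
    · rw [h0 hd, (hf0 a).mpr hd]; simp
    · have := (h1 hd).2
      rw [hk, ← hf0, map_sub, sub_eq_zero] at this
      rw [← this, map_pow]
  have hsep : ∀ v w, IsCR v → IsCR w → f v = f w → v = w := by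
    intro v w hv hw h
    apply cr_sep hπ hcop hv hw
    rw [← hf0, map_sub, h, sub_self]
  have hone : ¬ π ∣ 1 := fun h => hπ.not_isUnit (isUnit_of_dvd_one h)
  let ψ : MulChar (Zω ⧸ Ideal.span {π}) Zω :=
    { toFun := fun x => χ (Quotient.out x) π
      map_one' := by
        have h1 := hout 1
        rw [map_one] at h1
        rw [h1]
        exact hsep _ _ (hcr 1 hone) (Or.inl rfl) (by rw [hpow]; simp)
      map_mul' := by
        intro x y
        obtain ⟨a, rfl⟩ := hsurj x
        obtain ⟨b, rfl⟩ := hsurj y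
        rw [← map_mul, hout, hout, hout, hχ.2.1]
      map_nonunit' := by
        intro x hx
        rw [isUnit_iff_ne_zero, not_not] at hx
        have := hout 0
        rw [map_zero] at this
        subst hx
        change χ (Quotient.out 0) π = 0
        rw [this]
        exact (hχ.2.2.2 0 π hπ hcop).1 (dvd_zero _) }
  have hψ : ∀ a, ψ (f a) = χ a π := hout
  obtain ⟨c1, c2, K, c3, c4⟩ := core f ψ t (hcq.trans ht)
    (by
      intro x hx
      obtain ⟨a, rfl⟩ := hsurj x
      rw [hψ]
      exact hcr a (fun h => hx ((hf0 a).mpr h)))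
    (by
      intro x
      obtain ⟨a, rfl⟩ := hsurj x
      rw [hψ, hpow]) hsep
  -- the Jacobi sum is `-π`
  set J := jacobiSum ψ ψ with hJ
  have hJπ : J = -π := by
    obtain ⟨u, hu⟩ := (hf0 J).mp c1
    rw [hu, NmNat_mul, hcq] at c2
    have hu1 : NmNat u = 1 := by
      have := NmNat_pos hπ.ne_zero
      exact Nat.eq_of_mul_eq_mul_left this (by rw [c2, mul_one])
    obtain ⟨a, b, hab⟩ := Zom_form u
    have hform : a ^ 2 - a * b + b ^ 2 = 1 := by
      rw [← NmNat_form, ← hab, hu1]; rfl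
    obtain ⟨r, hr⟩ := c4
    have h3 : ((3 : ℤ) : Zω) ∣ ((a - 2 : ℤ) : Zω) + (b : ℤ) * ωZ := by
      refine ⟨3 * r + (t - lamZ * K) - u * (m + n * ωZ), ?_⟩
      push_cast
      rw [hu] at hr
      linear_combination hr - hab - u * he
    obtain ⟨d1, d2⟩ := dvd_form.mp h3
    have hb1 : b ≤ 1 := by nlinarith [sq_nonneg (2 * a - b)]
    have hb2 : -1 ≤ b := by nlinarith [sq_nonneg (2 * a - b)]
    have hb : b = 0 := by omega
    subst hb
    have ha1 : a ≤ 1 := by nlinarith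
    have ha2 : -1 ≤ a := by nlinarith
    have ha : a = -1 := by omega
    subst ha
    rw [hu, hab]; push_cast; ring
  have hKn : (3 : ℤ) ∣ K + n := by
    have h9 : ((9 : ℤ) : Zω) ∣ ((-3 - 3 * m - 3 * t + 3 * K : ℤ) : Zω) + ((-3 * n - 3 * K : ℤ) : Zω) * ωZ := by
      push_cast
      convert c4 using 1
      rw [hJπ, he]; unfold lamZ; ring
    have := (dvd_form.mp h9).2
    omega
  have hχω : χ ωZ π = ωZ ^ (t + 1) := by
    refine hsep _ _ (hcr _ fun h => hπ.not_isUnit (isUnit_of_dvd_unit h omZ_isUnit)) (isCR_pow _) ?_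
    rw [hpow, map_pow]
  have hχm1 : χ (-1) π = 1 := by
    have h : IsCR (χ (-1) π) := hcr _ (by rw [dvd_neg]; exact hone)
    have h2 := h.cube
    rw [pow_succ, pow_two, ← hχ.2.1, ← hχ.2.1] at h2
    simpa using h2
  have h3ndvd : ¬ π ∣ 3 := fun h => hπ.not_isUnit (hcop.isUnit_of_dvd' dvd_rfl h)
  have h3e : (3 : Zω) = (-1) * (ωZ * ωZ * (lamZ * lamZ)) := by
    unfold lamZ
    linear_combination (ωZ ^ 2 - 3 * ωZ + 3) * omZ_sq
  obtain ⟨e, hlame⟩ : ∃ e : ℕ, χ lamZ π = ωZ ^ e := by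
    have : IsCR (χ lamZ π) := hcr _ (fun h => h3ndvd (by
      rw [h3e]; exact (((h.mul_left _).mul_left _).mul_left _)))
    rcases this with h | h | h
    · exact ⟨0, by simpa using h⟩
    · exact ⟨1, by simpa using h⟩
    · exact ⟨2, h⟩
  have h3f : ψ 3 = χ 3 π := (congrArg ψ (map_ofNat f 3).symm).trans (hψ 3)
  rw [h3f, h3e, hχ.2.1, hχ.2.1, hχ.2.1, hχ.2.1, hχm1, hχω, hlame] at c3
  have hsum := omZ_pow_one (k := (t + 1) + (t + 1) + (e + e) + K) (by rw [← c3]; ring)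
  have hkm : (3 : ℤ) ∣ ((t + 1 : ℕ) : ℤ) - (2 * m - n) := by
    generalize m ^ 2 - m * n + n ^ 2 = z at hN
    omega
  rw [hχω, hlame]
  push_cast [coe_omZ]
  exact ⟨omega_zpow hkm, omega_zpow (by omega)⟩

lemma exists_primary_assoc (a b : ℤ) (h : ¬ (3 : ℤ) ∣ a + b) :
    ∃ u v : Zω, u * v = 1 ∧ (3 : Zω) ∣ u * (a + b * ωZ) - 1 := by
  have hc : ((3 : ℤ) ∣ a - 1 ∧ (3 : ℤ) ∣ b) ∨ ((3 : ℤ) ∣ a + 1 ∧ (3 : ℤ) ∣ b) ∨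
      ((3 : ℤ) ∣ a ∧ (3 : ℤ) ∣ b - 1) ∨ ((3 : ℤ) ∣ a ∧ (3 : ℤ) ∣ b + 1) ∨
      ((3 : ℤ) ∣ a - 1 ∧ (3 : ℤ) ∣ b - 1) ∨ ((3 : ℤ) ∣ a + 1 ∧ (3 : ℤ) ∣ b + 1) := by omega
  have cast3 : ∀ x y : ℤ, x = 3 * y → (x : Zω) = 3 * y := by
    intro x y h; rw [h]; push_cast; ring
  rcases hc with ⟨⟨x, hx⟩, ⟨y, hy⟩⟩ | ⟨⟨x, hx⟩, ⟨y, hy⟩⟩ | ⟨⟨x, hx⟩, ⟨y, hy⟩⟩ | ⟨⟨x, hx⟩, ⟨y, hy⟩⟩ |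
    ⟨⟨x, hx⟩, ⟨y, hy⟩⟩ | ⟨⟨x, hx⟩, ⟨y, hy⟩⟩ <;>
    have hx' := cast3 _ _ hx <;> have hy' := cast3 _ _ hy <;> push_cast at hx' hy'
  · exact ⟨1, 1, by ring, x + y * ωZ, by linear_combination hx' + ωZ * hy'⟩
  · exact ⟨-1, -1, by ring, -(x + y * ωZ), by linear_combination -hx' - ωZ * hy'⟩
  · exact ⟨ωZ ^ 2, ωZ, by rw [← omZ_cube]; ring, ωZ ^ 2 * (x + y * ωZ), by
      linear_combination ωZ ^ 2 * hx' + ωZ ^ 3 * hy' + omZ_cube⟩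
  · exact ⟨-ωZ ^ 2, -ωZ, by rw [← omZ_cube]; ring, -ωZ ^ 2 * (x + y * ωZ), by
      linear_combination -ωZ ^ 2 * hx' - ωZ ^ 3 * hy' + omZ_cube⟩
  · exact ⟨-ωZ, -ωZ ^ 2, by rw [← omZ_cube]; ring, -ωZ * (x + y * ωZ), by
      linear_combination -ωZ * hx' - ωZ ^ 2 * hy' - omZ_sq⟩
  · exact ⟨ωZ, ωZ ^ 2, by rw [← omZ_cube]; ring, ωZ * (x + y * ωZ), by
      linear_combination ωZ * hx' + ωZ ^ 2 * hy' - omZ_sq⟩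

lemma primary_form {c : Zω} (hc : (3 : Zω) ∣ c - 1) : ∃ m n : ℤ, c = 1 + 3 * (m + n * ωZ) := by
  obtain ⟨r, hr⟩ := hc
  obtain ⟨m, n, rfl⟩ := Zom_form r
  exact ⟨m, n, by linear_combination hr⟩

lemma NmNat_primary (m n : ℤ) :
    (NmNat (1 + 3 * (m + n * ωZ)) : ℤ) = 1 + 6 * m - 3 * n + 9 * (m ^ 2 - m * n + n ^ 2) := by
  have : (1 + 3 * (m + n * ωZ) : Zω) = ((1 + 3 * m : ℤ) : Zω) + ((3 * n : ℤ) : Zω) * ωZ := by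
    push_cast; ring
  rw [this, NmNat_form]; ring

lemma supplement {χ : Zω → Zω → Zω} (hχ : IsCubicSymbol χ) (c : Zω) (hc : (3 : Zω) ∣ c - 1) :
    ∃ m n : ℤ, c = 1 + 3 * (m + n * ωZ) ∧
      (χ ωZ c : ℂ) = ω ^ (2 * m - n) ∧ (χ lamZ c : ℂ) = ω ^ m := by
  induction c using WellFounded.induction (IsWellFounded.wf (α := Zω) (r := DvdNotUnit)) with
  | _ c ih =>
  obtain ⟨m, n, hmn⟩ := primary_form hc
  have hNc : (NmNat c : ℤ) = 1 + 6 * m - 3 * n + 9 * (m ^ 2 - m * n + n ^ 2) := by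
    rw [hmn]; exact NmNat_primary m n
  have hc0 : c ≠ 0 := by
    rintro rfl
    have : NmNat 0 = 0 := by simp [NmNat]
    rw [this] at hNc
    generalize m ^ 2 - m * n + n ^ 2 = z at hNc
    omega
  by_cases hu : IsUnit c
  · obtain ⟨d, hd⟩ := hu.exists_right_inv
    have h1 : NmNat c * NmNat d = 1 := by
      rw [← NmNat_mul, hd]; simp [NmNat]
    have h2 : NmNat c = 1 := Nat.eq_one_of_mul_eq_one_right h1
    rw [h2] at hNc
    have h3 : 4 = (2 * (1 + 3 * m) - 3 * n) ^ 2 + 27 * n ^ 2 := by push_cast at hNc; linarith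
    have hn : n = 0 := by
      by_contra hn
      have : 0 < n ^ 2 := by positivity
      nlinarith [sq_nonneg (2 * (1 + 3 * m) - 3 * n)]
    subst hn
    have hm : m = 0 := by
      have : m * (2 + 3 * m) = 0 := by linarith
      rcases mul_eq_zero.mp this with h | h <;> omega
    subst hm
    have hc1 : c = 1 := by rw [hmn]; simp
    refine ⟨0, 0, hmn, ?_, ?_⟩ <;> rw [hc1, hχ.2.2.1] <;> simp
  · obtain ⟨p, hp, s, hs⟩ := WfDvdMonoid.exists_irreducible_factor hu hc0
    obtain ⟨a, b, hab⟩ := Zom_form p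
    have hnd : ¬ (3 : ℤ) ∣ a + b := by
      rintro ⟨w, hw⟩
      have h1 : (NmNat c : ℤ) = (a ^ 2 - a * b + b ^ 2) * NmNat s := by
        rw [hs, NmNat_mul, hab]; push_cast; rw [NmNat_form]
      have h2 : a ^ 2 - a * b + b ^ 2 = 3 * (3 * w ^ 2 - a * b) := by
        have : (a + b) ^ 2 = 9 * w ^ 2 := by rw [hw]; ring
        linarith
      rw [h2, hNc, mul_assoc] at h1
      generalize (3 * w ^ 2 - a * b) * (NmNat s : ℤ) = y at h1
      generalize m ^ 2 - m * n + n ^ 2 = z at h1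
      omega
    obtain ⟨u, v, huv, h3⟩ := exists_primary_assoc a b hnd
    rw [← hab] at h3
    have hup : Prime (u * p) := by
      have hass : Associated p (u * p) :=
        ((associated_isUnit_mul_left_iff (IsUnit.of_mul_eq_one v huv)).mpr (Associated.refl p)).symm
      exact hass.prime hp.prime
    have hfac : c = (v * s) * (u * p) := by rw [hs]; linear_combination (- p * s) * huv
    have hvs : (3 : Zω) ∣ v * s - 1 := by
      have h4 := dvd_sub hc (h3.mul_left (v * s))
      have e : c - 1 - v * s * (u * p - 1) = v * s - 1 := by rw [hfac]; ring
      rwa [e] at h4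
    obtain ⟨m₁, n₁, e1, f1, g1⟩ := ih (v * s) ⟨fun h => hc0 (by rw [hfac, h, zero_mul]), u * p, hup.not_isUnit, hfac⟩ hvs
    obtain ⟨m₂, n₂, e2⟩ := primary_form h3
    obtain ⟨f2, g2⟩ := prime_case hχ hup m₂ n₂ e2
    have h0 : ω ≠ 0 := omega_prim.ne_zero (by norm_num)
    have hz : ∀ i j : ℤ, (3 : ℤ) ∣ i - j → ω ^ i = ω ^ j := by
      intro i j h
      have h1 : ω ^ (i - j) = 1 := (omega_prim.zpow_eq_one_iff_dvd _).mpr (by exact_mod_cast h)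
      rwa [zpow_sub₀ h0, div_eq_one_iff_eq (zpow_ne_zero _ h0)] at h1
    refine ⟨m₁ + m₂ + 3 * (m₁ * m₂ - n₁ * n₂),
      n₁ + n₂ + 3 * (m₁ * n₂ + n₁ * m₂ - n₁ * n₂), ?_, ?_, ?_⟩
    · rw [hfac, e1, e2]; push_cast
      linear_combination 9 * (n₁ * n₂ : Zω) * omZ_sq
    · rw [hfac, hχ.1]; push_cast
      rw [f1, f2, ← zpow_add₀ h0]
      apply hz
      ring_nf
      omega
    · rw [hfac, hχ.1]; push_cast
      rw [g1, g2, ← zpow_add₀ h0]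
      apply hz
      ring_nf
      omega

lemma geom_omega (j : ℤ) : ∑ a ∈ Finset.range 3, (ω ^ j) ^ a = if (3 : ℤ) ∣ j then 3 else 0 := by
  have hone : ω ^ j = 1 ↔ (3 : ℤ) ∣ j := by
    rw [omega_prim.zpow_eq_one_iff_dvd]; norm_num
  rw [Finset.sum_range_succ, Finset.sum_range_succ, Finset.sum_range_one]
  split_ifs with h
  · rw [hone.mpr h]; norm_num
  · have h1 : ω ^ j - 1 ≠ 0 := sub_ne_zero.mpr (fun h' => h (hone.mp h'))
    have h3 : (ω ^ j) ^ 3 = 1 := by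
      rw [← zpow_natCast, ← zpow_mul, mul_comm, zpow_mul, zpow_natCast, omega_prim.pow_eq_one, one_zpow]
    apply mul_left_cancel₀ h1
    linear_combination h3

lemma chi_pow {χ : Zω → Zω → Zω} (hχ : IsCubicSymbol χ) {c : Zω} (h1 : χ 1 c = 1) (x : Zω) (k : ℕ) :
    χ (x ^ k) c = χ x c ^ k := by
  induction k with
  | zero => simpa using h1
  | succ k ih => rw [pow_succ, pow_succ, hχ.2.1, ih]

lemma conj_omega : (starRingEnd ℂ) ω = ω⁻¹ :=
  (Complex.inv_eq_conj (Complex.norm_eq_one_of_pow_eq_one omega_prim.pow_eq_one (by norm_num))).symm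

open Complex Classical in
/-- for `q ≡ c ≡ 1 (mod 3)`, the indicator of `q ≡ c (mod 9)` equals
`(1/9) Σ_{a,b=0}^{2} χ_c(ωᵃλᵇ) conj(χ_q(ωᵃλᵇ))`, where `χ_m(x) = (x/m)₃`. -/
theorem indicator_mod_nine (χ : Zω → Zω → Zω) (hχ : IsCubicSymbol χ)
    (q c : Zω) (hq : (3 : Zω) ∣ (q - 1)) (hc : (3 : Zω) ∣ (c - 1)) :
    (if (9 : Zω) ∣ (q - c) then (1 : ℂ) else 0) =
      (1 / 9) * ∑ a ∈ Finset.range 3, ∑ b ∈ Finset.range 3,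
        ((χ (ωZ ^ a * lamZ ^ b) c : Zω) : ℂ) *
          (starRingEnd ℂ) ((χ (ωZ ^ a * lamZ ^ b) q : Zω) : ℂ) := by

  have h0 : ω ≠ 0 := omega_prim.ne_zero (by norm_num)
  obtain ⟨m, n, ec, fc, gc⟩ := supplement hχ c hc
  obtain ⟨m', n', eq, fq, gq⟩ := supplement hχ q hq
  have hone : ∀ (x : Zω) (j : ℤ), (χ ωZ x : ℂ) = ω ^ j → χ 1 x = 1 := by
    intro x j hx
    have h1 := hχ.2.1 1 ωZ x
    rw [one_mul] at h1
    have hne : χ ωZ x ≠ 0 := by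
      intro h
      rw [h] at hx
      exact zpow_ne_zero j h0 hx.symm
    exact mul_right_cancel₀ hne (by rw [← h1, one_mul])
  have hterm : ∀ a b : ℕ, ((χ (ωZ ^ a * lamZ ^ b) c : Zω) : ℂ) *
          (starRingEnd ℂ) ((χ (ωZ ^ a * lamZ ^ b) q : Zω) : ℂ) =
      (ω ^ ((2 * m - n) - (2 * m' - n'))) ^ a * (ω ^ (m - m')) ^ b := by
    intro a b
    rw [hχ.2.1, hχ.2.1, chi_pow hχ (hone c _ fc), chi_pow hχ (hone c _ fc),
      chi_pow hχ (hone q _ fq), chi_pow hχ (hone q _ fq)]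
    push_cast
    rw [fc, gc, fq, gq, map_mul, map_pow, map_pow, map_zpow₀, map_zpow₀, conj_omega,
      sub_eq_add_neg (2 * m - n), sub_eq_add_neg m, zpow_add₀ h0, zpow_add₀ h0, inv_zpow', inv_zpow',
      mul_pow, mul_pow]
    ring
  simp only [hterm]
  rw [← Finset.sum_mul_sum, geom_omega, geom_omega]
  have hiff : (9 : Zω) ∣ q - c ↔ (3 : ℤ) ∣ (2 * m - n) - (2 * m' - n') ∧ (3 : ℤ) ∣ m - m' := by
    have e : q - c = ((3 * (m' - m) : ℤ) : Zω) + ((3 * (n' - n) : ℤ) : Zω) * ωZ := by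
      rw [ec, eq]; push_cast; ring
    have h9 : (9 : Zω) = ((9 : ℤ) : Zω) := by norm_num
    rw [e, h9, dvd_form]
    omega
  by_cases h1 : (3 : ℤ) ∣ (2 * m - n) - (2 * m' - n') <;> by_cases h2 : (3 : ℤ) ∣ m - m' <;>
    simp only [hiff, h1, h2, and_self, and_true, and_false, if_true, if_false] <;> norm_num
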